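/- Define u(r,θ) = 2mar/(ρ²Δ + 2mr(r² + a²)), f(r,θ) = ρ²Δ/((r² + a²)² − Δ a² sin²θ), and for (r,θ) with r > r₊, 0 < θ < π, t ∈ ℝ and v = (v₁, v₂, v₃) ∈ ℝ³ the spatial quadratic form G(r,θ,t)(v) = ρ²(v₁²/Δ + v₂²) + (sin²θ/ρ²)((r² + a²)² − Δ a² sin²θ)·(t(∂u/∂r · v₁ + ∂u/∂θ · v₂) + v₃)². Then for every compact subset C of {(r,θ) : r > r₊, 0 < θ < π} there exist constants A > 0 and B > 0 such that for all (r,θ) ∈ C, all t ∈ ℝ and all v ∈ ℝ³: G(r,θ,t)(v) ≤ f(r,θ)·(A + B|t|)²·(v₁² + v₂² + v₃²). (This is the metric growth condition for the orthogonal splitting of the exterior Kerr–Newman spacetime, with F(t) = A + B|t| satisfying ∫_{−∞}^0 dt/F(t) = ∞.) -/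

import Mathlib

noncomputable section

open Real

/-- Δ = r² − 2mr + a² + q² -/
def Delta (m a q r : ℝ) : ℝ := r ^ 2 - 2 * m * r + a ^ 2 + q ^ 2

/-- ρ² = r² + a² cos²θ -/
def rhoSq (a r θ : ℝ) : ℝ := r ^ 2 + a ^ 2 * Real.cos θ ^ 2

/-- r₊ = m + √(m² − a² − q²) -/
def rPlus (m a q : ℝ) : ℝ := m + Real.sqrt (m ^ 2 - a ^ 2 - q ^ 2)

/-- u(r,θ) = 2mar/(ρ²Δ + 2mr(r² + a²)). -/
def uKN (m a q r θ : ℝ) : ℝ :=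
  2 * m * a * r / (rhoSq a r θ * Delta m a q r + 2 * m * r * (r ^ 2 + a ^ 2))

/-- f(r,θ) = ρ²Δ/((r² + a²)² − Δ a² sin²θ). -/
def fKN (m a q r θ : ℝ) : ℝ :=
  rhoSq a r θ * Delta m a q r /
    ((r ^ 2 + a ^ 2) ^ 2 - Delta m a q r * a ^ 2 * Real.sin θ ^ 2)

/-- The spatial quadratic form G(r,θ,t)(v) of the orthogonal splitting. -/
def GKN (m a q r θ t : ℝ) (v : ℝ × ℝ × ℝ) : ℝ :=
  rhoSq a r θ * (v.1 ^ 2 / Delta m a q r + v.2.1 ^ 2)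
  + (Real.sin θ ^ 2 / rhoSq a r θ) *
      ((r ^ 2 + a ^ 2) ^ 2 - Delta m a q r * a ^ 2 * Real.sin θ ^ 2) *
      (t * (deriv (fun r' => uKN m a q r' θ) r * v.1
            + deriv (fun θ' => uKN m a q r θ') θ * v.2.1) + v.2.2) ^ 2

/-! Since `t` enters `G` only through the shear `t du(v) + v₃`, Cauchy–Schwarz bounds `G` by
`(c₀ + c₁ t²) |v|²`, where `c₀` and `c₁` are continuous functions of `(r, θ)` as long as `r > r₊`.
There `f > 0`, because its denominator equals `ρ²Δ + (2mr − q²)(r² + a²)` and `q² ≤ m² ≤ 2mr`.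
On a compact set the continuous functions `c₀ / f` and `c₁ / f` are at most some `A²` and `B²`, and
`A² + B² t² ≤ (A + B |t|)²`. -/

section QuadraticGrowth

variable {X : Type*} [TopologicalSpace X] {C : Set X}

lemma exists_pos_forall_le_mul_sq (hC : IsCompact C) {f g : X → ℝ}
    (hf : ContinuousOn f C) (hg : ContinuousOn g C) (hpos : ∀ p ∈ C, 0 < f p) :
    ∃ A : ℝ, 0 < A ∧ ∀ p ∈ C, g p ≤ f p * A ^ 2 := by
  obtain ⟨M, hM⟩ := hC.bddAbove_image (hg.div hf fun p hp ↦ (hpos p hp).ne')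
  refine ⟨|M| + 1, by positivity, fun p hp ↦ ?_⟩
  rw [← div_le_iff₀' (hpos p hp)]
  calc g p / f p ≤ M := hM (Set.mem_image_of_mem _ hp)
    _ ≤ |M| := le_abs_self M
    _ ≤ (|M| + 1) ^ 2 := by nlinarith [abs_nonneg M]

lemma sq_add_sq_mul_sq_le {A B : ℝ} (hA : 0 ≤ A) (hB : 0 ≤ B) (t : ℝ) :
    A ^ 2 + B ^ 2 * t ^ 2 ≤ (A + B * |t|) ^ 2 := by
  rw [← sq_abs t, ← mul_pow]
  exact pow_add_pow_le hA (by positivity) two_ne_zero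

lemma exists_pos_forall_add_mul_sq_le (hC : IsCompact C) {c₀ c₁ f : X → ℝ}
    (hc₀ : ContinuousOn c₀ C) (hc₁ : ContinuousOn c₁ C) (hf : ContinuousOn f C)
    (hpos : ∀ p ∈ C, 0 < f p) :
    ∃ A B : ℝ, 0 < A ∧ 0 < B ∧
      ∀ p ∈ C, ∀ t : ℝ, c₀ p + c₁ p * t ^ 2 ≤ f p * (A + B * |t|) ^ 2 := by
  obtain ⟨A, hA, hc₀A⟩ := exists_pos_forall_le_mul_sq hC hf hc₀ hpos
  obtain ⟨B, hB, hc₁B⟩ := exists_pos_forall_le_mul_sq hC hf hc₁ hpos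
  refine ⟨A, B, hA, hB, fun p hp t ↦ ?_⟩
  calc c₀ p + c₁ p * t ^ 2 ≤ f p * A ^ 2 + f p * B ^ 2 * t ^ 2 := by
        gcongr
        exacts [hc₀A p hp, hc₁B p hp]
    _ = f p * (A ^ 2 + B ^ 2 * t ^ 2) := by ring
    _ ≤ f p * (A + B * |t|) ^ 2 :=
        mul_le_mul_of_nonneg_left (sq_add_sq_mul_sq_le hA.le hB.le t) (hpos p hp).le

end QuadraticGrowth

section ShearedForm

variable (t x y v₁ v₂ v₃ : ℝ)

lemma sheared_sq_le :
    (t * (x * v₁ + y * v₂) + v₃) ^ 2 ≤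
      (1 + (x ^ 2 + y ^ 2) * t ^ 2) * (v₁ ^ 2 + v₂ ^ 2 + v₃ ^ 2) := by
  have h := Finset.sum_mul_sq_le_sq_mul_sq Finset.univ ![t * x, t * y, 1] ![v₁, v₂, v₃]
  simp only [Fin.sum_univ_three, Matrix.cons_val] at h
  linarith

variable {α β κ : ℝ}

lemma sheared_form_le (hα : 0 ≤ α) (hβ : 0 ≤ β) (hκ : 0 ≤ κ) :
    α * v₁ ^ 2 + β * v₂ ^ 2 + κ * (t * (x * v₁ + y * v₂) + v₃) ^ 2 ≤
      (α + β + κ + κ * (x ^ 2 + y ^ 2) * t ^ 2) * (v₁ ^ 2 + v₂ ^ 2 + v₃ ^ 2) := by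
  set N := v₁ ^ 2 + v₂ ^ 2 + v₃ ^ 2
  have h₁ : v₁ ^ 2 ≤ N := by linarith [sq_nonneg v₂, sq_nonneg v₃]
  have h₂ : v₂ ^ 2 ≤ N := by linarith [sq_nonneg v₁, sq_nonneg v₃]
  calc α * v₁ ^ 2 + β * v₂ ^ 2 + κ * (t * (x * v₁ + y * v₂) + v₃) ^ 2
      ≤ α * N + β * N + κ * ((1 + (x ^ 2 + y ^ 2) * t ^ 2) * N) := by
        gcongr
        exact sheared_sq_le t x y v₁ v₂ v₃
    _ = (α + β + κ + κ * (x ^ 2 + y ^ 2) * t ^ 2) * N := by ring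

end ShearedForm

lemma continuousAt_deriv_of_contDiffAt_uncurry {𝕜 E F : Type*} [NontriviallyNormedField 𝕜]
    [NormedAddCommGroup E] [NormedSpace 𝕜 E] [NormedAddCommGroup F] [NormedSpace 𝕜 F]
    {f : E → 𝕜 → F} {g : E → 𝕜} {p : E}
    (hf : ContDiffAt 𝕜 1 (Function.uncurry f) (p, g p)) (hg : ContDiffAt 𝕜 0 g p) :
    ContinuousAt (fun p ↦ deriv (f p) (g p)) p :=
  ((hf.fderiv hg (by norm_num)).clm_apply contDiffAt_const).continuousAt

section KerrNewman

/-- The denominator `(r² + a²)² − Δ a² sin²θ` of the lapse. -/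
def lapseDenom (m a q r θ : ℝ) : ℝ :=
  (r ^ 2 + a ^ 2) ^ 2 - Delta m a q r * a ^ 2 * Real.sin θ ^ 2

/-- The azimuthal component `g_φφ` of the Kerr–Newman metric. -/
def gPhiPhi (m a q r θ : ℝ) : ℝ :=
  Real.sin θ ^ 2 / rhoSq a r θ * lapseDenom m a q r θ

/-- The squared length of the gradient of `u` for the flat metric `dr² + dθ²`. -/
def gradSqU (m a q r θ : ℝ) : ℝ :=
  deriv (fun r' ↦ uKN m a q r' θ) r ^ 2 + deriv (fun θ' ↦ uKN m a q r θ') θ ^ 2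

variable {m a q r θ : ℝ}

lemma lt_of_rPlus_lt (hr : rPlus m a q < r) : m < r :=
  (le_add_of_nonneg_right (Real.sqrt_nonneg _)).trans_lt hr

lemma Delta_pos (hr : rPlus m a q < r) : 0 < Delta m a q r := by
  have h : m ^ 2 - a ^ 2 - q ^ 2 < (r - m) ^ 2 :=
    Real.lt_sq_of_sqrt_lt (lt_sub_iff_add_lt'.2 hr)
  unfold Delta
  linarith

lemma rhoSq_pos (hr : r ≠ 0) : 0 < rhoSq a r θ := by
  unfold rhoSq
  positivity

lemma lapseDenom_eq_rhoSq_mul_Delta_add :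
    lapseDenom m a q r θ =
      rhoSq a r θ * Delta m a q r + (2 * m * r - q ^ 2) * (r ^ 2 + a ^ 2) := by
  unfold lapseDenom rhoSq Delta
  rw [Real.sin_sq]
  ring

lemma lapseDenom_pos (hm : 0 ≤ m) (hmaq : a ^ 2 + q ^ 2 ≤ m ^ 2) (hr : rPlus m a q < r) :
    0 < lapseDenom m a q r θ := by
  have hmr := lt_of_rPlus_lt hr
  have hρ : 0 < rhoSq a r θ := rhoSq_pos (hm.trans_lt hmr).ne'
  have hΔ := Delta_pos hr
  have hq : 0 ≤ 2 * m * r - q ^ 2 := by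
    linarith [sq_nonneg a, sq_nonneg m, mul_le_mul_of_nonneg_left hmr.le hm]
  rw [lapseDenom_eq_rhoSq_mul_Delta_add]
  positivity

lemma fKN_pos (hm : 0 ≤ m) (hmaq : a ^ 2 + q ^ 2 ≤ m ^ 2) (hr : rPlus m a q < r) :
    0 < fKN m a q r θ :=
  div_pos (mul_pos (rhoSq_pos (hm.trans_lt (lt_of_rPlus_lt hr)).ne') (Delta_pos hr))
    (lapseDenom_pos hm hmaq hr)

lemma uKN_denom_pos (hm : 0 ≤ m) (hr : rPlus m a q < r) :
    0 < rhoSq a r θ * Delta m a q r + 2 * m * r * (r ^ 2 + a ^ 2) := by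
  have hr₀ : 0 < r := hm.trans_lt (lt_of_rPlus_lt hr)
  have hρ : 0 < rhoSq a r θ := rhoSq_pos hr₀.ne'
  have hΔ := Delta_pos hr
  positivity

lemma contDiffAt_uKN (hm : 0 ≤ m) (hr : rPlus m a q < r) :
    ContDiffAt ℝ 1 (fun p : ℝ × ℝ ↦ uKN m a q p.1 p.2) (r, θ) := by
  unfold uKN
  refine ContDiffAt.div (by fun_prop) ?_ (uKN_denom_pos hm hr).ne'
  unfold rhoSq Delta
  fun_prop

lemma continuousAt_gradSqU (hm : 0 ≤ m) (hr : rPlus m a q < r) :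
    ContinuousAt (fun p : ℝ × ℝ ↦ gradSqU m a q p.1 p.2) (r, θ) := by
  have hu := contDiffAt_uKN (θ := θ) hm hr
  have hu_r : ContinuousAt (fun p : ℝ × ℝ ↦ deriv (fun r' ↦ uKN m a q r' p.2) p.1) (r, θ) :=
    continuousAt_deriv_of_contDiffAt_uncurry
      (hu.comp ((r, θ), r) (f := fun z : (ℝ × ℝ) × ℝ ↦ (z.2, z.1.2)) (by fun_prop)) contDiffAt_fst
  have hu_θ : ContinuousAt (fun p : ℝ × ℝ ↦ deriv (fun θ' ↦ uKN m a q p.1 θ') p.2) (r, θ) :=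
    continuousAt_deriv_of_contDiffAt_uncurry
      (hu.comp ((r, θ), θ) (f := fun z : (ℝ × ℝ) × ℝ ↦ (z.1.1, z.2)) (by fun_prop)) contDiffAt_snd
  exact (hu_r.pow 2).add (hu_θ.pow 2)

lemma continuous_rhoSq : Continuous fun p : ℝ × ℝ ↦ rhoSq a p.1 p.2 := by
  unfold rhoSq
  fun_prop

lemma continuous_Delta : Continuous fun p : ℝ × ℝ ↦ Delta m a q p.1 := by
  unfold Delta
  fun_prop

lemma continuous_lapseDenom : Continuous fun p : ℝ × ℝ ↦ lapseDenom m a q p.1 p.2 := by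
  unfold lapseDenom Delta
  fun_prop

lemma continuousAt_gPhiPhi (hr : r ≠ 0) :
    ContinuousAt (fun p : ℝ × ℝ ↦ gPhiPhi m a q p.1 p.2) (r, θ) :=
  (ContinuousAt.div (by fun_prop) continuous_rhoSq.continuousAt (rhoSq_pos hr).ne').mul
    continuous_lapseDenom.continuousAt

lemma continuousAt_fKN (hm : 0 ≤ m) (hmaq : a ^ 2 + q ^ 2 ≤ m ^ 2) (hr : rPlus m a q < r) :
    ContinuousAt (fun p : ℝ × ℝ ↦ fKN m a q p.1 p.2) (r, θ) :=
  (continuous_rhoSq.mul continuous_Delta).continuousAt.div continuous_lapseDenom.continuousAt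
    (lapseDenom_pos hm hmaq hr).ne'

lemma GKN_le (hm : 0 ≤ m) (hmaq : a ^ 2 + q ^ 2 ≤ m ^ 2) (hr : rPlus m a q < r)
    (t : ℝ) (v : ℝ × ℝ × ℝ) :
    GKN m a q r θ t v ≤
      (rhoSq a r θ / Delta m a q r + rhoSq a r θ + gPhiPhi m a q r θ
        + gPhiPhi m a q r θ * gradSqU m a q r θ * t ^ 2) *
          (v.1 ^ 2 + v.2.1 ^ 2 + v.2.2 ^ 2) := by
  have hρ : 0 < rhoSq a r θ := rhoSq_pos (hm.trans_lt (lt_of_rPlus_lt hr)).ne'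
  have hg : 0 ≤ gPhiPhi m a q r θ :=
    mul_nonneg (by positivity) (lapseDenom_pos hm hmaq hr).le
  refine le_of_eq_of_le ?_
    (sheared_form_le t _ _ v.1 v.2.1 v.2.2 (div_pos hρ (Delta_pos hr)).le hρ.le hg)
  unfold GKN gPhiPhi lapseDenom
  ring

end KerrNewman

theorem metric_growth_condition_general (m a q : ℝ) (hm : 0 ≤ m)
    (hmaq : a ^ 2 + q ^ 2 ≤ m ^ 2)
    (C : Set (ℝ × ℝ)) (hC : IsCompact C) (hCsub : C ⊆ {p : ℝ × ℝ | rPlus m a q < p.1}) :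
    ∃ A B : ℝ, 0 < A ∧ 0 < B ∧
      ∀ p ∈ C, ∀ t : ℝ, ∀ v : ℝ × ℝ × ℝ,
        GKN m a q p.1 p.2 t v ≤
          fKN m a q p.1 p.2 * (A + B * |t|) ^ 2 *
            (v.1 ^ 2 + v.2.1 ^ 2 + v.2.2 ^ 2) := by
  have hρ : ContinuousOn (fun p : ℝ × ℝ ↦ rhoSq a p.1 p.2) C := continuous_rhoSq.continuousOn
  have hρΔ : ContinuousOn (fun p : ℝ × ℝ ↦ rhoSq a p.1 p.2 / Delta m a q p.1) C :=
    hρ.div continuous_Delta.continuousOn fun p hp ↦ (Delta_pos (hCsub hp)).ne'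
  have hg : ContinuousOn (fun p : ℝ × ℝ ↦ gPhiPhi m a q p.1 p.2) C := fun p hp ↦
    (continuousAt_gPhiPhi (hm.trans_lt (lt_of_rPlus_lt (hCsub hp))).ne').continuousWithinAt
  have hu : ContinuousOn (fun p : ℝ × ℝ ↦ gradSqU m a q p.1 p.2) C := fun p hp ↦
    (continuousAt_gradSqU hm (hCsub hp)).continuousWithinAt
  have hf : ContinuousOn (fun p : ℝ × ℝ ↦ fKN m a q p.1 p.2) C := fun p hp ↦
    (continuousAt_fKN hm hmaq (hCsub hp)).continuousWithinAt
  obtain ⟨A, B, hA, hB, hAB⟩ := exists_pos_forall_add_mul_sq_le hC ((hρΔ.add hρ).add hg)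
    (hg.mul hu) hf fun p hp ↦ fKN_pos hm hmaq (hCsub hp)
  exact ⟨A, B, hA, hB, fun p hp t v ↦ (GKN_le hm hmaq (hCsub hp) t v).trans
    (mul_le_mul_of_nonneg_right (hAB p hp t) (by positivity))⟩

theorem metric_growth_condition (m a q : ℝ) (hm : 0 < m) (ha : 0 ≤ a)
    (hmaq : a ^ 2 + q ^ 2 ≤ m ^ 2)
    (C : Set (ℝ × ℝ)) (hC : IsCompact C)
    (hCsub : C ⊆ {p : ℝ × ℝ | rPlus m a q < p.1 ∧ 0 < p.2 ∧ p.2 < π}) :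
    ∃ A B : ℝ, 0 < A ∧ 0 < B ∧
      ∀ p ∈ C, ∀ t : ℝ, ∀ v : ℝ × ℝ × ℝ,
        GKN m a q p.1 p.2 t v ≤
          fKN m a q p.1 p.2 * (A + B * |t|) ^ 2 *
            (v.1 ^ 2 + v.2.1 ^ 2 + v.2.2 ^ 2) :=
  metric_growth_condition_general m a q hm.le hmaq C hC fun _ hp ↦ (hCsub hp).1
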